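/- Gap labels of the Fibonacci subshift: let α = (√5 − 1)/2 be the inverse of the golden mean. For every T-ergodic Borel probability measure μ on the Fibonacci subshift Ω, the set {∫_Ω g dμ : g : Ω → ℤ continuous} ⊆ ℝ equals ℤ + αℤ = {m + nα : m, n ∈ ℤ}. -/

import Mathlib

/-!
The argument uses only that `μ` is an invariant probability measure, and works with the function
`f w = μ(cylinder of w)` on words. Such functions (`Weight`) are additive under extending a word by
one letter on the left or on the right, and vanish off the language of the subshift.

The key operation is desubstitution, `(D f) w = f (S(w) 0)`. Because `11` is not in the language and
because `S(w) 0` can only occur in a legal word in step with the blocks `S(0) = 01`, `S(1) = 0`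
(`leg_desub`), `D f` is again a weight, with `D f 0 = f 1` and `D f 1 = f 0 - f 1`.

* Every word of length at least two has the mass `D f v` of a shorter word `v`, or mass zero
  (`Weight.exists_shorter`), so by induction all masses lie in `ℤ f 0 + ℤ f 1` (`Weight.mem_span`).
* Nonnegativity of all iterates `D^n f` forces `f 1 = α f 0` (`Weight.one_eq`): the defect
  `f 1 - α f 0` is multiplied by `-1/α` at each step but remains bounded by the total mass. With
  `f 0 + f 1 = 1` this gives `f 0 = α` and `f 1 = 1 - α`.

By compactness a continuous integer-valued function is a function of a finite window
(`exists_window`), so its integral is an integer combination of masses of words and lies in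
`ℤ + αℤ`. Conversely `m + nα` is the integral of `m + n 1_{ω(0) = 0}`.
-/


open MeasureTheory

/-- The Fibonacci substitution on the alphabet `{0,1}`: `0 ↦ 01`, `1 ↦ 0`. -/
def fibSub : Fin 2 → List (Fin 2) := fun a => if a = 0 then [0, 1] else [0]

/-- The words `u_n = S^n(0)` for the Fibonacci substitution. -/
def fibWord : ℕ → List (Fin 2)
  | 0 => [0]
  | n + 1 => (fibWord n).flatMap fibSub

/-- The Fibonacci subshift: all two-sided sequences each of whose finite subwords is a
subword of some `u_n`. -/
def fibSubshift : Set (ℤ → Fin 2) :=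
  {ω | ∀ (a : ℤ) (k : ℕ), ∃ n : ℕ,
    (List.ofFn fun i : Fin k => ω (a + (i : ℕ))) <:+: fibWord n}

/-! ### Combinatorics of the substitution -/

/-- The language of the subshift: subwords of the words `u_n`. -/
def Leg (w : List (Fin 2)) : Prop := ∃ n, w <:+: fibWord n

lemma Leg.mono {v w : List (Fin 2)} (h : v <:+: w) (hw : Leg w) : Leg v :=
  hw.imp fun _ hn => h.trans hn

/-- A substituted word `S(v)` never starts with `1`. -/
lemma head_flatMap (v : List (Fin 2)) (t : List (Fin 2)) : ¬ (1 :: t) <+: v.flatMap fibSub := by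
  rcases v with _ | ⟨a, v⟩
  · simp
  · fin_cases a <;> simp [fibSub]

lemma no11_flatMap (v : List (Fin 2)) : ¬ [1, 1] <:+: v.flatMap fibSub := by
  induction v with
  | nil => simp
  | cons a v ih =>
    have := head_flatMap v []
    have := head_flatMap v [1]
    fin_cases a <;> simp_all [fibSub, List.infix_cons_iff]

lemma not_leg_11 : ¬ Leg [1, 1] := by
  rintro ⟨n, hn⟩
  rcases n with _ | n
  · simpa [fibWord] using hn.length_le
  · exact no11_flatMap _ hn

/-- Recognisability: every `0` starts a block, so the trailing `0` decides whether the last block of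
`S(w)` is `0` or `01`. -/
lemma prefix_desub (w v : List (Fin 2)) (h : w.flatMap fibSub ++ [0] <+: v.flatMap fibSub) :
    w <+: v := by
  induction w generalizing v with
  | nil => simp
  | cons a w ih =>
    rcases v with _ | ⟨b, v⟩
    · simp at h
    have key : ∀ t, w.flatMap fibSub ++ [0] ≠ 1 :: t := by
      intro t ht
      rcases w with _ | ⟨c, w⟩
      · simp at ht
      · fin_cases c <;> simp [fibSub] at ht
    have h1 := head_flatMap v
    fin_cases a <;> fin_cases b <;> simp [fibSub] at h ⊢
    · exact ih v h
    · exact absurd h (h1 _)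
    · rcases hw : w.flatMap fibSub ++ [0] with _ | ⟨c, t⟩
      · simp at hw
      · rw [hw] at h
        obtain ⟨rfl, -⟩ := List.cons_prefix_cons.1 h
        exact key t hw
    · exact ih v h

/-- An occurrence of `S(w)0` begins with `0`, hence at a block boundary of `S(v)`. -/
lemma infix_desub (w v : List (Fin 2)) (h : w.flatMap fibSub ++ [0] <:+: v.flatMap fibSub) :
    w <:+: v := by
  induction v with
  | nil => simp at h
  | cons b v ih =>
    have key : ∀ t, ¬ w.flatMap fibSub ++ [0] <+: 1 :: t := by
      intro t ht
      rcases w with _ | ⟨c, w⟩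
      · simp at ht
      · fin_cases c <;> simp [fibSub] at ht
    rw [List.infix_cons_iff]
    have hp := prefix_desub w (b :: v)
    rcases eq_or_ne b 0 with rfl | hb
    · have e : (0 :: v).flatMap fibSub = 0 :: 1 :: v.flatMap fibSub := by simp [fibSub]
      rw [e] at h hp
      rcases List.infix_cons_iff.1 h with h | h
      · exact .inl (hp h)
      · rcases List.infix_cons_iff.1 h with h | h
        · exact absurd h (key _)
        · exact .inr (ih h)
    · have e : (b :: v).flatMap fibSub = 0 :: v.flatMap fibSub := by simp [fibSub, hb]
      rw [e] at h hp
      rcases List.infix_cons_iff.1 h with h | h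
      · exact .inl (hp h)
      · exact .inr (ih h)

lemma leg_desub (w : List (Fin 2)) (h : Leg (w.flatMap fibSub ++ [0])) : Leg w := by
  obtain ⟨n, hn⟩ := h
  rcases n with _ | n
  -- `u_0 = 0` is not itself a substituted word, but it is a subword of `S(0)`.
  · refine ⟨0, infix_desub w _ (hn.trans ?_)⟩
    exact ⟨[], [1], by simp [fibWord, fibSub]⟩
  · exact ⟨n, infix_desub w _ hn⟩

/-- A word without `11` that does not start with `1` is a substituted word; each letter `1` of it is
absorbed into a block `01`. -/
lemma exists_desub (y : List (Fin 2)) (h : ¬ [1, 1] <:+: y) (h1 : ∀ t, y ≠ 1 :: t) :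
    ∃ v : List (Fin 2), v.flatMap fibSub = y ∧ v.length + y.count 1 = y.length := by
  match y with
  | [] => exact ⟨[], by simp⟩
  | 1 :: t => exact absurd rfl (h1 t)
  | [0] => exact ⟨[1], by simp [fibSub]⟩
  | 0 :: 0 :: t =>
    obtain ⟨v, hv, hl⟩ := exists_desub (0 :: t) (fun h' => h (List.infix_cons h')) (by simp)
    exact ⟨1 :: v, by simp [fibSub, hv], by simp at hl ⊢; omega⟩
  | 0 :: 1 :: t =>
    obtain ⟨v, hv, hl⟩ := exists_desub t
      (fun h' => h (List.infix_cons (List.infix_cons h'))) (by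
        rintro s rfl
        exact h ⟨[0], s, by simp⟩)
    exact ⟨0 :: v, by simp [fibSub, hv], by simp at hl ⊢; omega⟩

/-! ### Weights on words and their desubstitution -/

/-- A finite shift-invariant measure on the subshift, recorded by its values on the cylinders
of words: a nonnegative function on words that is additive under extension to either side and
vanishes off the language. -/
structure Weight (f : List (Fin 2) → ℝ) : Prop where
  nonneg : ∀ w, 0 ≤ f w
  left : ∀ w, f w = f (0 :: w) + f (1 :: w)
  right : ∀ w, f w = f (w ++ [0]) + f (w ++ [1])
  legal : ∀ w, ¬ Leg w → f w = 0

/-- The desubstituted weight: the mass of `w` is the mass of the places where `w` is read in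
blocks `S(0) = 01`, `S(1) = 0`. The final `0` marks the start of the next block, so that the last
block is recognised unambiguously. -/
def derive (f : List (Fin 2) → ℝ) : List (Fin 2) → ℝ := fun w => f (w.flatMap fibSub ++ [0])

namespace Weight

variable {f : List (Fin 2) → ℝ}

lemma zero_of_11 (hf : Weight f) {w : List (Fin 2)} (h : [1, 1] <:+: w) : f w = 0 :=
  hf.legal w fun hw => not_leg_11 (hw.mono h)

lemma one_left (hf : Weight f) (w : List (Fin 2)) : f (1 :: w) = f (0 :: 1 :: w) := by
  rw [hf.left, hf.zero_of_11 (w := 1 :: 1 :: w) ⟨[], w, by simp⟩, add_zero]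

lemma one_right (hf : Weight f) (w : List (Fin 2)) : f (w ++ [1]) = f (w ++ [1] ++ [0]) := by
  rw [hf.right, hf.zero_of_11 (w := w ++ [1] ++ [1]) ⟨w, [], by simp⟩, add_zero]

/-- Summing `D f` over extensions by a letter recovers `f (S(w)0)`, because a `1` is always both
preceded and followed by `0`. -/
lemma derive (hf : Weight f) : Weight (derive f) where
  nonneg w := hf.nonneg _
  left w := by
    have := hf.left (w.flatMap fibSub ++ [0])
    have := hf.one_left (w.flatMap fibSub ++ [0])
    simp [_root_.derive, fibSub] at *
    linarith
  right w := by
    have := hf.right (w.flatMap fibSub ++ [0])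
    have := hf.one_right (w.flatMap fibSub ++ [0])
    simp [_root_.derive, fibSub] at *
    linarith
  legal w hw := hf.legal _ fun h => hw (leg_desub w h)

lemma derive_zero (hf : Weight f) : _root_.derive f [0] = f [1] := by
  have h1 := hf.one_left []
  have h2 := hf.one_right [0]
  simp [_root_.derive, fibSub] at *
  linarith

lemma derive_one (hf : Weight f) : _root_.derive f [1] = f [0] - f [1] := by
  have h1 := hf.one_left []
  have h2 := hf.right [0]
  simp [_root_.derive, fibSub] at *
  linarith

/-- Every word of length at least two has the same mass as a block word `S(v)0` with `v` strictly
shorter, unless its mass is zero. -/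
lemma exists_shorter (hf : Weight f) (w : List (Fin 2)) (hw : 2 ≤ w.length) :
    f w = 0 ∨ ∃ v : List (Fin 2), v.length < w.length ∧ f w = _root_.derive f v := by
  by_cases h11 : [1, 1] <:+: w
  · exact .inl (hf.zero_of_11 h11)
  right
  obtain ⟨a, t, rfl⟩ : ∃ a t, w = a :: t := by
    rcases w with _ | ⟨a, t⟩
    · simp at hw
    · exact ⟨a, t, rfl⟩
  obtain ⟨s, b, rfl⟩ : ∃ s b, t = s ++ [b] := by
    rcases List.eq_nil_or_concat t with rfl | ⟨s, b, rfl⟩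
    · simp at hw
    · exact ⟨s, b, by simp⟩
  have hy : ∀ y : List (Fin 2), y <:+: a :: (s ++ [b]) → ¬ [1, 1] <:+: y :=
    fun y h h' => h11 (h'.trans h)
  have hpre : a :: s <:+: a :: (s ++ [b]) := ⟨[], [b], by simp⟩
  -- A word starting (or ending) with `1` keeps its mass when a `0` is put before (or after) it;
  -- the normalised word is `S(v)0`, and `exists_desub` counts the length of `v`.
  have h01 : ∀ y : List (Fin 2), ¬ [1, 1] <:+: y → ¬ [1, 1] <:+: 0 :: y := by
    intro y h
    simp [List.infix_cons_iff, h]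
  have two : ∀ c : Fin 2, c = 0 ∨ c = 1 := by decide
  rcases two a with rfl | rfl <;> rcases two b with rfl | rfl
  · obtain ⟨v, hv, hl⟩ := exists_desub (0 :: s) (hy _ hpre) (by simp)
    refine ⟨v, ?_, ?_⟩
    · simp at hl ⊢; omega
    · simp [_root_.derive, hv]
  · obtain ⟨v, hv, hl⟩ := exists_desub (0 :: (s ++ [1])) h11 (by simp)
    refine ⟨v, ?_, ?_⟩
    · simp at hl ⊢; omega
    · have := hf.one_right (0 :: s)
      simpa [_root_.derive, hv] using this
  · obtain ⟨v, hv, hl⟩ := exists_desub (0 :: 1 :: s) (h01 _ (hy _ hpre)) (by simp)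
    refine ⟨v, ?_, ?_⟩
    · simp at hl ⊢; omega
    · rw [hf.one_left]
      simp [_root_.derive, hv]
  · obtain ⟨v, hv, hl⟩ := exists_desub (0 :: 1 :: (s ++ [1])) (h01 _ h11) (by simp)
    refine ⟨v, ?_, ?_⟩
    · simp at hl ⊢; omega
    · have := hf.one_right (0 :: 1 :: s)
      rw [hf.one_left]
      simpa [_root_.derive, hv] using this

/-- The masses of all words lie in the group generated by the masses of the two letters. -/
lemma mem_span (hf : Weight f) (w : List (Fin 2)) :
    ∃ m n : ℤ, f w = m * f [0] + n * f [1] := by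
  induction hk : w.length using Nat.strong_induction_on generalizing f w with
  | _ k ih =>
    subst hk
    by_cases hw : 2 ≤ w.length
    · rcases hf.exists_shorter w hw with h0 | ⟨v, hv, h⟩
      · exact ⟨0, 0, by simp [h0]⟩
      · obtain ⟨m, n, hmn⟩ := ih _ hv hf.derive v rfl
        refine ⟨n, m - n, ?_⟩
        rw [h, hmn, hf.derive_zero, hf.derive_one]
        push_cast
        ring
    · match w, hw with
      | [], _ => exact ⟨1, 1, by simpa using hf.left []⟩
      | [a], _ =>
        fin_cases a
        · exact ⟨1, 0, by simp⟩
        · exact ⟨0, 1, by simp⟩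
      | _ :: _ :: _, hw => simp at hw

/-- Desubstitution multiplies `f [1] - α f [0]` by `-1/α` while not increasing the total mass, so
this defect must vanish. -/
lemma one_eq (hf : Weight f) : f [1] = (√5 - 1) / 2 * f [0] := by
  set α : ℝ := (√5 - 1) / 2 with hα
  have h5 : √5 ^ 2 = 5 := Real.sq_sqrt (by norm_num)
  have h5' : 0 ≤ √5 := Real.sqrt_nonneg 5
  have hα2 : α * (1 + α) = 1 := by rw [hα]; nlinarith
  have hα0 : 0 < α := by rw [hα]; nlinarith
  have hα1 : α < 1 := by nlinarith
  have key : ∀ n : ℕ, ∀ g, Weight g → |g [1] - α * g [0]| ≤ α ^ n * (g [0] + g [1]) := by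
    intro n
    induction n with
    | zero =>
      intro g hg
      have := hg.nonneg [0]
      have := hg.nonneg [1]
      rw [abs_le]
      constructor <;> nlinarith
    | succ n ih =>
      intro g hg
      have h := ih _ hg.derive
      rw [hg.derive_zero, hg.derive_one] at h
      -- The defect of `g` is `-α` times the defect of its desubstitution.
      have e : g [1] - α * g [0] = -α * (g [0] - g [1] - α * g [1]) := by
        linear_combination (-g [1]) * hα2
      rw [e, abs_mul, abs_neg, abs_of_pos hα0, pow_succ']
      have h1 : α * |g [0] - g [1] - α * g [1]| ≤ α * (α ^ n * g [0]) := by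
        gcongr
        simpa using h
      have h2 : 0 ≤ α * α ^ n * g [1] := mul_nonneg (by positivity) (hg.nonneg _)
      linarith
  have lim : Filter.Tendsto (fun n : ℕ => α ^ n * (f [0] + f [1])) Filter.atTop (nhds 0) := by
    simpa using (tendsto_pow_atTop_nhds_zero_of_lt_one hα0.le hα1).mul_const (f [0] + f [1])
  have := ge_of_tendsto' lim fun n => key n f hf
  exact sub_eq_zero.1 (abs_eq_zero.1 (le_antisymm this (abs_nonneg _)))

end Weight

/-! ### The weight of an invariant measure -/

/-- The word of length `k` read in `ω` from position `a`. -/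
def window (ω : ℤ → Fin 2) (a : ℤ) (k : ℕ) : List (Fin 2) :=
  List.ofFn fun i : Fin k => ω (a + (i : ℕ))

lemma window_succ (ω : ℤ → Fin 2) (a : ℤ) (k : ℕ) :
    window ω a (k + 1) = ω a :: window ω (a + 1) k := by
  simp [window, List.ofFn_succ, add_assoc, add_comm (1 : ℤ)]

lemma window_succ_last (ω : ℤ → Fin 2) (a : ℤ) (k : ℕ) :
    window ω a (k + 1) = window ω a k ++ [ω (a + k)] := by
  simp only [window, List.ofFn_succ_last, Fin.val_castSucc, Fin.val_last]

/-- The cylinder of points of the subshift in which the word `w` is read from position `a`. -/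
def cyl (a : ℤ) (w : List (Fin 2)) : Set ↥fibSubshift := {ω | window ω a w.length = w}

lemma measurable_coord (a : ℤ) : Measurable fun ω : ↥fibSubshift => (ω : ℤ → Fin 2) a :=
  (measurable_pi_apply a).comp measurable_subtype_coe

lemma cyl_cons (a : ℤ) (b : Fin 2) (w : List (Fin 2)) :
    cyl a (b :: w) = {ω : ↥fibSubshift | (ω : ℤ → Fin 2) a = b} ∩ cyl (a + 1) w := by
  ext ω
  simp [cyl, window_succ]

lemma cyl_concat (a : ℤ) (b : Fin 2) (w : List (Fin 2)) :
    cyl a (w ++ [b]) = {ω : ↥fibSubshift | (ω : ℤ → Fin 2) (a + w.length) = b} ∩ cyl a w := by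
  ext ω
  simp [cyl, window_succ_last, and_comm]

lemma measurableSet_cyl (a : ℤ) (w : List (Fin 2)) : MeasurableSet (cyl a w) := by
  induction w generalizing a with
  | nil => simp [cyl, window]
  | cons b w ih =>
    rw [cyl_cons]
    exact (measurable_coord a (measurableSet_singleton b)).inter (ih _)

/-- The two values of the coordinate at `c` split a set, which itself need not be measurable. -/
lemma measure_split (μ : Measure ↥fibSubshift) [IsProbabilityMeasure μ] (c : ℤ)
    (s : Set ↥fibSubshift) :
    μ.real s = μ.real ({ω | (ω : ℤ → Fin 2) c = 0} ∩ s) +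
      μ.real ({ω | (ω : ℤ → Fin 2) c = 1} ∩ s) := by
  have hm : MeasurableSet {ω : ↥fibSubshift | (ω : ℤ → Fin 2) c = 0} :=
    measurable_coord c (measurableSet_singleton 0)
  have hc : {ω : ↥fibSubshift | (ω : ℤ → Fin 2) c = 1} =
      {ω : ↥fibSubshift | (ω : ℤ → Fin 2) c = 0}ᶜ := by
    ext ω
    have : ∀ x : Fin 2, x = 1 ↔ ¬ x = 0 := by decide
    simp [this]
  rw [hc, Set.inter_comm, Set.inter_comm _ s, ← Set.sdiff_eq,
    measureReal_inter_add_sdiff hm]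

/-- By invariance, the measure of a cylinder does not depend on its position. -/
lemma measure_cyl {TΩ : ↥fibSubshift → ↥fibSubshift}
    (hTΩ : ∀ ω : ↥fibSubshift, ((TΩ ω : ℤ → Fin 2)) = fun n => (ω : ℤ → Fin 2) (n + 1))
    {μ : Measure ↥fibSubshift} (hT : MeasurePreserving TΩ μ μ)
    (a : ℤ) (w : List (Fin 2)) : μ.real (cyl a w) = μ.real (cyl 0 w) := by
  have step : ∀ b : ℤ, μ.real (cyl (b + 1) w) = μ.real (cyl b w) := by
    intro b
    rw [← hT.measureReal_preimage (measurableSet_cyl b w).nullMeasurableSet]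
    congr 1
    ext ω
    simp [cyl, window, hTΩ, add_right_comm]
  induction a using Int.induction_on with
  | zero => rfl
  | succ n ih => rw [step, ih]
  | pred n ih => rw [← step, sub_add_cancel, ih]

lemma weight_measure {TΩ : ↥fibSubshift → ↥fibSubshift}
    (hTΩ : ∀ ω : ↥fibSubshift, ((TΩ ω : ℤ → Fin 2)) = fun n => (ω : ℤ → Fin 2) (n + 1))
    {μ : Measure ↥fibSubshift} [IsProbabilityMeasure μ] (hT : MeasurePreserving TΩ μ μ) :
    Weight fun w => μ.real (cyl 0 w) where
  nonneg _ := measureReal_nonneg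
  left w := by
    rw [← measure_cyl hTΩ hT (0 + 1) w, cyl_cons, cyl_cons]
    exact measure_split μ _ _
  right w := by
    rw [cyl_concat, cyl_concat]
    exact measure_split μ _ _
  legal w hw := by
    have : cyl 0 w = ∅ := by
      refine Set.eq_empty_of_forall_notMem fun ω hω => hw ?_
      obtain ⟨n, hn⟩ := ω.2 0 w.length
      exact ⟨n, (show window ω 0 w.length = w from hω) ▸ hn⟩
    simp [this]

lemma measure_letters {TΩ : ↥fibSubshift → ↥fibSubshift}
    (hTΩ : ∀ ω : ↥fibSubshift, ((TΩ ω : ℤ → Fin 2)) = fun n => (ω : ℤ → Fin 2) (n + 1))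
    {μ : Measure ↥fibSubshift} [IsProbabilityMeasure μ] (hT : MeasurePreserving TΩ μ μ) :
    μ.real (cyl 0 [0]) = (√5 - 1) / 2 ∧ μ.real (cyl 0 [1]) = 1 - (√5 - 1) / 2 := by
  have hf := weight_measure hTΩ hT
  have h1 : μ.real (cyl 0 []) = 1 := by simp [cyl, window]
  have h2 := hf.left []
  have h3 := hf.one_eq
  simp only [h1] at h2 h3
  have hα2 : (√5 - 1) / 2 * (1 + (√5 - 1) / 2) = 1 := by
    have h5 : √5 ^ 2 = 5 := Real.sq_sqrt (by norm_num)
    linear_combination h5 / 4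
  generalize (√5 - 1) / 2 = α at *
  have hA : μ.real (cyl 0 [0]) = α := by
    linear_combination -α * h2 - α * h3 - μ.real (cyl 0 [0]) * hα2
  exact ⟨hA, by linear_combination -h2 - hA⟩

/-! ### Continuous integer-valued functions -/

/-- The subshift is closed in `𝒜^ℤ`: each of its conditions concerns finitely many coordinates. -/
instance : CompactSpace ↥fibSubshift := by
  rw [← isCompact_iff_compactSpace]
  refine IsClosed.isCompact ?_
  have : fibSubshift = ⋂ (a : ℤ) (k : ℕ), (fun (ω : ℤ → Fin 2) (i : Fin k) => ω (a + (i : ℕ))) ⁻¹'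
      {p | Leg (List.ofFn p)} := by
    ext ω
    simp [fibSubshift, Leg]
  rw [this]
  refine isClosed_iInter fun a => isClosed_iInter fun k => ?_
  exact (isClosed_discrete _).preimage (by fun_prop)

/-- By compactness, a continuous integer-valued function depends on finitely many coordinates. -/
lemma exists_window (g : C(↥fibSubshift, ℤ)) : ∃ N : ℕ, ∀ ω ω' : ↥fibSubshift,
    (∀ i : ℤ, |i| ≤ N → (ω : ℤ → Fin 2) i = (ω' : ℤ → Fin 2) i) → g ω = g ω' := by
  -- `U N` is the set of points near which the window of radius `N` determines `g`.
  let U : ℕ → Set ↥fibSubshift := fun N => {ω | ∀ ω' : ↥fibSubshift,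
    (∀ i : ℤ, |i| ≤ N → (ω : ℤ → Fin 2) i = (ω' : ℤ → Fin 2) i) → g ω = g ω'}
  have hopen : ∀ N, IsOpen (U N) := by
    intro N
    rw [isOpen_iff_mem_nhds]
    intro ω hω
    have hfin : {i : ℤ | |i| ≤ N}.Finite := by
      refine (Set.finite_Icc (-(N : ℤ)) N).subset fun i hi => ?_
      exact abs_le.1 hi
    have hev : ∀ᶠ ω₁ : ↥fibSubshift in nhds ω, ∀ i ∈ {i : ℤ | |i| ≤ N},
        (ω₁ : ℤ → Fin 2) i = (ω : ℤ → Fin 2) i := by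
      rw [Filter.eventually_all_finite hfin]
      intro i _
      have hc : Continuous fun ω₁ : ↥fibSubshift => (ω₁ : ℤ → Fin 2) i :=
        (continuous_apply i).comp continuous_subtype_val
      exact hc.continuousAt.eventually (IsOpen.mem_nhds (isOpen_discrete {(ω : ℤ → Fin 2) i}) rfl)
    filter_upwards [hev] with ω₁ h₁ ω' h'
    rw [← hω ω₁ fun i hi => (h₁ i hi).symm]
    exact hω ω' fun i hi => (h₁ i hi).symm.trans (h' i hi)
  have hcover : (Set.univ : Set ↥fibSubshift) ⊆ ⋃ N, U N := by
    intro ω _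
    have hg : g ⁻¹' {g ω} ∈ nhds ω :=
      g.continuous.continuousAt (IsOpen.mem_nhds (isOpen_discrete _) rfl)
    rw [nhds_subtype, Filter.mem_comap] at hg
    obtain ⟨V, hV, hVg⟩ := hg
    rw [nhds_pi, Filter.mem_pi] at hV
    obtain ⟨I, hI, t, ht, htV⟩ := hV
    obtain ⟨M, hM⟩ := (hI.image fun i : ℤ => i.natAbs).bddAbove
    refine Set.mem_iUnion.2 ⟨M, fun ω' h => ?_⟩
    have : ω' ∈ g ⁻¹' {g ω} := hVg (htV fun i hi => by
      rw [← h i (by have := hM (Set.mem_image_of_mem _ hi); rw [Int.abs_eq_natAbs]; exact_mod_cast this)]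
      exact mem_of_mem_nhds (ht i))
    exact this.symm
  have hmono : Monotone U := fun M N h ω hω ω' h' =>
    hω ω' fun i hi => h' i (hi.trans (by exact_mod_cast h))
  obtain ⟨N, hN⟩ := isCompact_univ.elim_directed_cover U hopen hcover hmono.directed_le
  exact ⟨N, fun ω => hN (Set.mem_univ ω)⟩

/-- Gap labels of the Fibonacci subshift: with `α = (√5 − 1)/2`, for every `T`-ergodic
probability measure `μ` on the Fibonacci subshift, the set of integrals of continuous
integer-valued functions equals `ℤ + αℤ`. -/
theorem stmt17
    (TΩ : ↥fibSubshift → ↥fibSubshift)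
    (hTΩ : ∀ ω : ↥fibSubshift, ((TΩ ω : ℤ → Fin 2)) = fun n => (ω : ℤ → Fin 2) (n + 1))
    (μ : Measure ↥fibSubshift) [IsProbabilityMeasure μ] (herg : Ergodic TΩ μ) :
    {x : ℝ | ∃ g : C(↥fibSubshift, ℤ), ∫ ω, ((g ω : ℤ) : ℝ) ∂μ = x}
      = {x : ℝ | ∃ m n : ℤ, x = (m : ℝ) + (n : ℝ) * ((Real.sqrt 5 - 1) / 2)} := by
  have hT := herg.toMeasurePreserving
  obtain ⟨h0, h1⟩ := measure_letters hTΩ hT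
  have hcyl : ∀ a w, ∃ m n : ℤ, μ.real (cyl a w) = m + n * ((√5 - 1) / 2) := by
    intro a w
    obtain ⟨m, n, h⟩ := (weight_measure hTΩ hT).mem_span w
    refine ⟨n, m - n, ?_⟩
    simp only [h0, h1] at h
    rw [measure_cyl hTΩ hT, h]
    push_cast
    ring
  ext x
  constructor
  · rintro ⟨g, rfl⟩
    obtain ⟨N, hN⟩ := exists_window g
    let π : ↥fibSubshift → Fin (2 * N + 1) → Fin 2 := fun ω i => (ω : ℤ → Fin 2) (-N + (i : ℕ))
    have hπ : Measurable π := measurable_pi_lambda _ fun i => measurable_coord _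
    have hfac : Function.FactorsThrough g π := by
      intro ω ω' h
      refine hN ω ω' fun i hi => ?_
      rw [abs_le] at hi
      have := congrFun h ⟨(i + N).toNat, by omega⟩
      have e : -(N : ℤ) + ((i + N).toNat : ℤ) = i := by omega
      simp only [π, e] at this
      exact this
    -- `g` factors through the window `π`; the value of `c` at words that do not occur is immaterial.
    let c : (Fin (2 * N + 1) → Fin 2) → ℤ := Function.extend π g 0
    have hc : ∀ ω, g ω = c (π ω) := fun ω => (hfac.extend_apply 0 ω).symm
    have hint : ∫ ω, ((g ω : ℤ) : ℝ) ∂μ = ∑ p, μ.real (cyl (-N) (List.ofFn p)) * (c p : ℝ) := by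
      have hmap : IsProbabilityMeasure (μ.map π) := Measure.isProbabilityMeasure_map hπ.aemeasurable
      simp_rw [hc]
      rw [← integral_map (f := fun p => (c p : ℝ)) hπ.aemeasurable
        (measurable_of_finite _).aestronglyMeasurable, integral_fintype .of_finite]
      refine Finset.sum_congr rfl fun p _ => ?_
      rw [map_measureReal_apply hπ (measurableSet_singleton p), smul_eq_mul]
      congr 2
      ext ω
      simp only [cyl, window, Set.mem_preimage, Set.mem_singleton_iff, Set.mem_ofPred_eq]
      rw [List.length_ofFn, List.ofFn_injective.eq_iff]
    choose m n hmn using hcyl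
    refine ⟨∑ p, m (-N) (List.ofFn p) * c p, ∑ p, n (-N) (List.ofFn p) * c p, ?_⟩
    rw [hint]
    push_cast
    rw [Finset.sum_mul, ← Finset.sum_add_distrib]
    refine Finset.sum_congr rfl fun p _ => ?_
    rw [hmn]
    ring
  · rintro ⟨m, n, rfl⟩
    have hcont : Continuous fun ω : ↥fibSubshift => (ω : ℤ → Fin 2) 0 :=
      (continuous_apply 0).comp continuous_subtype_val
    refine ⟨⟨fun ω => m + n * (if (ω : ℤ → Fin 2) 0 = 0 then 1 else 0),
      (continuous_of_discreteTopology (f := fun b : Fin 2 => m + n * (if b = 0 then 1 else 0))).comp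
        hcont⟩, ?_⟩
    have e : ∀ ω : ↥fibSubshift, ((m + n * (if (ω : ℤ → Fin 2) 0 = 0 then 1 else 0) : ℤ) : ℝ) =
        m + n * (cyl 0 [0]).indicator (fun _ => (1 : ℝ)) ω := by
      intro ω
      simp [cyl, window, Set.indicator_apply]
    simp only [ContinuousMap.coe_mk, e]
    have hi : Integrable ((cyl 0 [0]).indicator fun _ => (1 : ℝ)) μ :=
      (integrable_const 1).indicator (measurableSet_cyl _ _)
    rw [integral_add (integrable_const _) (hi.const_mul _), integral_const_mul,
      integral_indicator_const _ (measurableSet_cyl _ _), h0]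
    simp
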